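/- Fix a rewrite order ⊴. Let G ⊆ R^m be finite with 0 ∉ G and such that no two distinct elements of G have the same signature, and let u be a term. Assume: (i) for all g_1, g_2 ∈ G that give rise to a regular S-pair with 𝔰(spair(g_1,g_2)) ≺_t u, the set G is a rewrite basis in 𝔰(spair(g_1,g_2)); and (ii) for every i ∈ {1,…,m} with e_i ≺_t u, the set G is a rewrite basis in the term e_i. Then G is a rewrite basis up to u. -/

import Mathlib

namespace SigGB

noncomputable section

/-- Power-products in `n` indeterminates, written additively as exponent vectors
(so the power-product `1` is `0`, and multiplication of power-products is `+`). -/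
abbrev PP (n : ℕ) : Type := Fin n →₀ ℕ

/-- Terms: a power-product together with a component index (`t·e_i ↝ (t, i)`). -/
abbrev Term (n m : ℕ) : Type := PP n × Fin m

/-- Multiplication of a term by a power-product: `t ⊗ (s·e_i) = (t·s)·e_i`. -/
def mulTerm {n m : ℕ} (t : PP n) (u : Term n m) : Term n m := (t + u.1, u.2)

/-- Divisibility of terms: `u ∣ v` iff `v = t ⊗ u` for some power-product `t`. -/
def termDvd {n m : ℕ} (u v : Term n m) : Prop := ∃ t : PP n, v = mulTerm t u

/-- Componentwise lcm of power-products. -/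
noncomputable def lcmPP {n : ℕ} (s t : PP n) : PP n := Finsupp.zipWith max (max_self 0) s t

/-- Strict part of a relation. -/
def strict {α : Type*} (r : α → α → Prop) (x y : α) : Prop := r x y ∧ x ≠ y

/-- `ple` is an admissible order on power-products and `tle` is a compatible
linear order on terms. -/
structure OrdersOK {n m : ℕ} (ple : PP n → PP n → Prop)
    (tle : Term n m → Term n m → Prop) : Prop where
  ple_refl : ∀ t, ple t t
  ple_trans : ∀ s t u, ple s t → ple t u → ple s u
  ple_antisymm : ∀ s t, ple s t → ple t s → s = t
  ple_total : ∀ s t, ple s t ∨ ple t s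
  ple_one_le : ∀ t, ple 0 t
  ple_mul : ∀ (t s₁ s₂ : PP n), ple s₁ s₂ → ple (t + s₁) (t + s₂)
  tle_refl : ∀ u, tle u u
  tle_trans : ∀ u v w, tle u v → tle v w → tle u w
  tle_antisymm : ∀ u v, tle u v → tle v u → u = v
  tle_total : ∀ u v, tle u v ∨ tle v u
  tle_mul : ∀ (t : PP n) (u v : Term n m), tle u v → tle (mulTerm t u) (mulTerm t v)
  tle_compat : ∀ (s t : PP n) (i j : Fin m), ple s t → i ≤ j → tle (s, i) (t, j)

variable {K : Type*} [Field K] {n m : ℕ} [NeZero m]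

variable (f : Fin m → MvPolynomial (Fin n) K)
variable (ple : PP n → PP n → Prop)
variable (tle : Term n m → Term n m → Prop)

/-- The module homomorphism `R^m → R` determined by `e_i ↦ f i`, i.e. `a ↦ ‾a`. -/
def bar (a : Fin m → MvPolynomial (Fin n) K) : MvPolynomial (Fin n) K := ∑ i, a i * f i

/-- Multiplication of a module element by a coefficient `c` and a power-product `t`. -/
noncomputable def monomMul (c : K) (t : PP n) (a : Fin m → MvPolynomial (Fin n) K) :
    Fin m → MvPolynomial (Fin n) K :=
  fun i => MvPolynomial.monomial t c * a i

/-- The coefficient of a term in a module element. -/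
def coeffM (a : Fin m → MvPolynomial (Fin n) K) (u : Term n m) : K :=
  MvPolynomial.coeff u.1 (a u.2)

open Classical in
/-- Leading power-product of a polynomial w.r.t. `ple`
(junk value `0`, i.e. the power-product `1`, for the zero polynomial). -/
noncomputable def lp (p : MvPolynomial (Fin n) K) : PP n :=
  if h : ∃ t, MvPolynomial.coeff t p ≠ 0 ∧ ∀ s, MvPolynomial.coeff s p ≠ 0 → ple s t
  then h.choose else 0

/-- Leading coefficient of a polynomial w.r.t. `ple`. -/
noncomputable def lc (p : MvPolynomial (Fin n) K) : K := MvPolynomial.coeff (lp ple p) p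

open Classical in
/-- Signature of a module element: its `tle`-largest term with nonzero coefficient
(junk value for `0`). -/
noncomputable def sig (a : Fin m → MvPolynomial (Fin n) K) : Term n m :=
  if h : ∃ u, coeffM a u ≠ 0 ∧ ∀ v, coeffM a v ≠ 0 → tle v u
  then h.choose else ((0 : PP n), (0 : Fin m))

/-- Leading coefficient of a module element. -/
noncomputable def lcM (a : Fin m → MvPolynomial (Fin n) K) : K := coeffM a (sig tle a)

/-- One-step s-reduction of `a` to `b` modulo `G`, witnessed by `g ∈ G` and the
power-product `t`. -/
def RedStepWith (G : Set (Fin m → MvPolynomial (Fin n) K))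
    (a b g : Fin m → MvPolynomial (Fin n) K) (t : PP n) : Prop :=
  g ∈ G ∧ bar f g ≠ 0 ∧
    MvPolynomial.coeff (t + lp ple (bar f g)) (bar f a) ≠ 0 ∧
    b = a - monomMul (MvPolynomial.coeff (t + lp ple (bar f g)) (bar f a) / lc ple (bar f g)) t g ∧
    tle (mulTerm t (sig tle g)) (sig tle a)

/-- The step witnessed by `g` and `t` is regular: `t ⊗ 𝔰(g) ≺_t 𝔰(a)`. -/
def RegularWith (a g : Fin m → MvPolynomial (Fin n) K) (t : PP n) : Prop :=
  strict tle (mulTerm t (sig tle g)) (sig tle a)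

/-- The step witnessed by `g` and `t` is top: `t·lp(‾g) = lp(‾a)`. -/
def TopWith (a g : Fin m → MvPolynomial (Fin n) K) (t : PP n) : Prop :=
  t + lp ple (bar f g) = lp ple (bar f a)

/-- `a` s-reduces to `b` modulo `G` in one step. -/
def SigRedStep (G : Set (Fin m → MvPolynomial (Fin n) K))
    (a b : Fin m → MvPolynomial (Fin n) K) : Prop :=
  ∃ g t, RedStepWith f ple tle G a b g t

/-- `a` regular s-reduces to `b` modulo `G` in one step. -/
def RegRedStep (G : Set (Fin m → MvPolynomial (Fin n) K))
    (a b : Fin m → MvPolynomial (Fin n) K) : Prop :=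
  ∃ g t, RedStepWith f ple tle G a b g t ∧ RegularWith tle a g t

/-- `a` regular top s-reduces to `b` modulo `G` in one step. -/
def RegTopRedStep (G : Set (Fin m → MvPolynomial (Fin n) K))
    (a b : Fin m → MvPolynomial (Fin n) K) : Prop :=
  ∃ g t, RedStepWith f ple tle G a b g t ∧ RegularWith tle a g t ∧ TopWith f ple a g t

/-- `a` is regular s-irreducible modulo `G`. -/
def RegIrred (G : Set (Fin m → MvPolynomial (Fin n) K))
    (a : Fin m → MvPolynomial (Fin n) K) : Prop :=
  ∀ b, ¬ RegRedStep f ple tle G a b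

/-- `a` is regular top s-irreducible modulo `G`. -/
def RegTopIrred (G : Set (Fin m → MvPolynomial (Fin n) K))
    (a : Fin m → MvPolynomial (Fin n) K) : Prop :=
  ∀ b, ¬ RegTopRedStep f ple tle G a b

/-- `a` s-reduces to zero modulo `G`. -/
def SigRedZero (G : Set (Fin m → MvPolynomial (Fin n) K))
    (a : Fin m → MvPolynomial (Fin n) K) : Prop :=
  ∃ b, Relation.ReflTransGen (SigRedStep f ple tle G) a b ∧ bar f b = 0

/-- `a` regular s-reduces to zero modulo `G`. -/
def RegRedZero (G : Set (Fin m → MvPolynomial (Fin n) K))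
    (a : Fin m → MvPolynomial (Fin n) K) : Prop :=
  ∃ b, Relation.ReflTransGen (RegRedStep f ple tle G) a b ∧ bar f b = 0

/-- `G` is a signature Gröbner basis in the term `u`. -/
def IsSigGBIn (G : Set (Fin m → MvPolynomial (Fin n) K)) (u : Term n m) : Prop :=
  ∀ a : Fin m → MvPolynomial (Fin n) K, a ≠ 0 → sig tle a = u → SigRedZero f ple tle G a

/-- `G` is a signature Gröbner basis up to the term `u`. -/
def IsSigGBUpto (G : Set (Fin m → MvPolynomial (Fin n) K)) (u : Term n m) : Prop :=
  ∀ v, strict tle v u → IsSigGBIn f ple tle G v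

/-- `u` is a syzygy signature. -/
def IsSyzSig (u : Term n m) : Prop :=
  ∃ a : Fin m → MvPolynomial (Fin n) K, a ≠ 0 ∧ sig tle a = u ∧ bar f a = 0

/-- The sig-poly-pair `(𝔰(a), ‾a)` of a module element `a`. -/
noncomputable def sppOf (a : Fin m → MvPolynomial (Fin n) K) :
    Term n m × MvPolynomial (Fin n) K :=
  (sig tle a, bar f a)

/-- `x` is a sig-poly-pair. -/
def IsSPP (x : Term n m × MvPolynomial (Fin n) K) : Prop :=
  ∃ a : Fin m → MvPolynomial (Fin n) K, a ≠ 0 ∧ sppOf f tle a = x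

/-- `ro` is a rewrite order. -/
def IsRewriteOrder
    (ro : Term n m × MvPolynomial (Fin n) K → Term n m × MvPolynomial (Fin n) K → Prop) :
    Prop :=
  (∀ x, IsSPP f tle x → ro x x) ∧
  (∀ x y z, IsSPP f tle x → IsSPP f tle y → IsSPP f tle z → ro x y → ro y z → ro x z) ∧
  (∀ x y, IsSPP f tle x → IsSPP f tle y → (ro x y ∨ ro y x)) ∧
  (∀ x y, IsSPP f tle x → IsSPP f tle y → ro x y → ro y x → x.1 = y.1) ∧
  (∀ (G : Set (Fin m → MvPolynomial (Fin n) K)) (a b : Fin m → MvPolynomial (Fin n) K),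
    IsSigGBUpto f ple tle G (sig tle b) → a ∈ G → b ∈ G → a ≠ 0 → b ≠ 0 →
    termDvd (sig tle a) (sig tle b) → RegTopIrred f ple tle G b →
    ro (sppOf f tle a) (sppOf f tle b))

/-- `a` is a canonical rewriter in the term `u` w.r.t. `G` (for the rewrite order `ro`). -/
def IsCanonRewriter
    (ro : Term n m × MvPolynomial (Fin n) K → Term n m × MvPolynomial (Fin n) K → Prop)
    (G : Set (Fin m → MvPolynomial (Fin n) K)) (u : Term n m)
    (a : Fin m → MvPolynomial (Fin n) K) : Prop :=
  a ∈ G ∧ a ≠ 0 ∧ termDvd (sig tle a) u ∧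
    ∀ g ∈ G, g ≠ 0 → termDvd (sig tle g) u → ro (sppOf f tle g) (sppOf f tle a)

/-- `G` is a rewrite basis in the term `u` (for the rewrite order `ro`). -/
def IsRBIn
    (ro : Term n m × MvPolynomial (Fin n) K → Term n m × MvPolynomial (Fin n) K → Prop)
    (G : Set (Fin m → MvPolynomial (Fin n) K)) (u : Term n m) : Prop :=
  IsSyzSig f tle u ∨
    ∃ g, IsCanonRewriter f tle ro G u g ∧
      RegTopIrred f ple tle G (monomMul (1 : K) (u.1 - (sig tle g).1) g)

/-- `G` is a rewrite basis up to the term `u` (for the rewrite order `ro`). -/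
def IsRBUpto
    (ro : Term n m × MvPolynomial (Fin n) K → Term n m × MvPolynomial (Fin n) K → Prop)
    (G : Set (Fin m → MvPolynomial (Fin n) K)) (u : Term n m) : Prop :=
  ∀ v, strict tle v u → IsRBIn f ple tle ro G v

/-- The S-pair of two module elements. -/
noncomputable def spair (a b : Fin m → MvPolynomial (Fin n) K) :
    Fin m → MvPolynomial (Fin n) K :=
  monomMul ((1 : K) / lc ple (bar f a))
      (lcmPP (lp ple (bar f a)) (lp ple (bar f b)) - lp ple (bar f a)) a -
    monomMul ((1 : K) / lc ple (bar f b))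
      (lcmPP (lp ple (bar f a)) (lp ple (bar f b)) - lp ple (bar f b)) b

/-- `a` and `b` give rise to a regular S-pair. -/
def IsRegularSPair (a b : Fin m → MvPolynomial (Fin n) K) : Prop :=
  bar f a ≠ 0 ∧ bar f b ≠ 0 ∧
    mulTerm (lcmPP (lp ple (bar f a)) (lp ple (bar f b)) - lp ple (bar f a)) (sig tle a) ≠
      mulTerm (lcmPP (lp ple (bar f a)) (lp ple (bar f b)) - lp ple (bar f b)) (sig tle b)

/-- `B` is a Gröbner basis of the ideal `I` w.r.t. `ple`. -/
def IsGroebnerBasis (B : Set (MvPolynomial (Fin n) K)) (I : Ideal (MvPolynomial (Fin n) K)) :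
    Prop :=
  (∀ b ∈ B, b ∈ I) ∧ Ideal.span B = I ∧
    ∀ p ∈ I, p ≠ 0 → ∃ b ∈ B, b ≠ 0 ∧ ∃ t : PP n, lp ple p = t + lp ple b

/-- One step of ordinary polynomial reduction of `p` to `q` modulo `B`. -/
def PolyRedStep (B : Set (MvPolynomial (Fin n) K)) (p q : MvPolynomial (Fin n) K) : Prop :=
  ∃ r ∈ B, r ≠ 0 ∧ ∃ t : PP n, MvPolynomial.coeff (t + lp ple r) p ≠ 0 ∧
    q = p - MvPolynomial.monomial t (MvPolynomial.coeff (t + lp ple r) p / lc ple r) * r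

theorem exists_max_of_total {α : Type*} {s : Set α} (hs : s.Finite)
    (hne : s.Nonempty) (r : α → α → Prop) (htotal : ∀ x ∈ s, ∀ y ∈ s, r x y ∨ r y x)
    (htrans : ∀ x ∈ s, ∀ y ∈ s, ∀ z ∈ s, r x y → r y z → r x z) :
    ∃ x ∈ s, ∀ y ∈ s, r y x := by
  have := hs.to_subtype
  have := hne.to_subtype
  let r' : s → s → Prop := fun x y => r x y
  have : IsTrans s r' := ⟨fun x y z => htrans x x.2 y y.2 z z.2⟩
  have hrefl : ∀ x, r' x x := fun x => (htotal x x.2 x x.2).elim id id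
  have hdir : Directed r' (id : s → s) := fun x y => (htotal x x.2 y y.2).elim
    (fun h => ⟨y, h, hrefl y⟩) (fun h => ⟨x, hrefl x, h⟩)
  obtain ⟨x, hx⟩ := hdir.finite_le (id : s → s)
  exact ⟨x, x.2, fun y hy => hx ⟨y, hy⟩⟩

section Terms

variable {ple tle}

omit [NeZero m] in
theorem mulTerm_mulTerm (s t : PP n) (u : Term n m) :
    mulTerm s (mulTerm t u) = mulTerm (s + t) u := by
  simp [mulTerm, add_assoc]

omit [NeZero m] in
theorem mulTerm_injective (t : PP n) :
    Function.Injective (mulTerm t : Term n m → Term n m) := fun u v h => by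
  simpa [mulTerm, Prod.ext_iff] using h

omit [NeZero m] in
theorem termDvd.trans {u v w : Term n m} (huv : termDvd u v) (hvw : termDvd v w) :
    termDvd u w := by
  obtain ⟨s, rfl⟩ := huv
  obtain ⟨t, rfl⟩ := hvw
  exact ⟨t + s, mulTerm_mulTerm t s u⟩

theorem le_lcmPP_left (s t : PP n) : s ≤ lcmPP s t := fun i => by
  simp [lcmPP, Finsupp.zipWith_apply]

theorem le_lcmPP_right (s t : PP n) : t ≤ lcmPP s t := fun i => by
  simp [lcmPP, Finsupp.zipWith_apply]

theorem lcmPP_le {s t u : PP n} (hs : s ≤ u) (ht : t ≤ u) : lcmPP s t ≤ u := fun i => by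
  simpa [lcmPP, Finsupp.zipWith_apply] using ⟨hs i, ht i⟩

omit [NeZero m] in
theorem OrdersOK.tle_mulTerm (hord : OrdersOK ple tle) (t : PP n) (u : Term n m) :
    tle u (mulTerm t u) := by
  have h := hord.ple_mul u.1 0 t (hord.ple_one_le t)
  rw [add_zero, add_comm] at h
  exact hord.tle_compat u.1 (t + u.1) u.2 u.2 h le_rfl

omit [NeZero m] in
theorem OrdersOK.strict_mulTerm_iff (hord : OrdersOK ple tle) (t : PP n) (u v : Term n m) :
    strict tle (mulTerm t u) (mulTerm t v) ↔ strict tle u v := by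
  constructor
  · rintro ⟨hle, hne⟩
    refine ⟨(hord.tle_total u v).resolve_right fun hvu => ?_, fun h => hne (h ▸ rfl)⟩
    exact hne (hord.tle_antisymm _ _ hle (hord.tle_mul t v u hvu))
  · rintro ⟨hle, hne⟩
    exact ⟨hord.tle_mul t u v hle, fun h => hne (mulTerm_injective t h)⟩

omit [NeZero m] in
theorem OrdersOK.strict_of_tle_of_strict (hord : OrdersOK ple tle) {u v w : Term n m}
    (huv : tle u v) (hvw : strict tle v w) : strict tle u w := by
  refine ⟨hord.tle_trans u v w huv hvw.1, ?_⟩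
  rintro rfl
  exact hvw.2 (hord.tle_antisymm _ _ hvw.1 huv)

end Terms

section Leading

variable {f ple tle}

omit [NeZero m] in
theorem exists_coeffM_ne_zero {a : Fin m → MvPolynomial (Fin n) K} (ha : a ≠ 0) :
    ∃ u, coeffM a u ≠ 0 := by
  obtain ⟨i, hi⟩ := Function.ne_iff.mp ha
  obtain ⟨t, ht⟩ := MvPolynomial.ne_zero_iff.mp hi
  exact ⟨(t, i), ht⟩

omit [NeZero m] in
theorem finite_setOf_coeffM_ne_zero (a : Fin m → MvPolynomial (Fin n) K) :
    {u | coeffM a u ≠ 0}.Finite := by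
  refine (Set.finite_iUnion fun i : Fin m =>
    (a i).support.finite_toSet.image fun t => ((t, i) : Term n m)).subset ?_
  rintro ⟨t, i⟩ hu
  exact Set.mem_iUnion.mpr ⟨i, t, MvPolynomial.mem_support_iff.mpr hu, rfl⟩

theorem OrdersOK.sig_spec (hord : OrdersOK ple tle) {a : Fin m → MvPolynomial (Fin n) K}
    (ha : a ≠ 0) :
    coeffM a (sig tle a) ≠ 0 ∧ ∀ v, coeffM a v ≠ 0 → tle v (sig tle a) := by
  have h : ∃ u, coeffM a u ≠ 0 ∧ ∀ v, coeffM a v ≠ 0 → tle v u :=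
    exists_max_of_total (finite_setOf_coeffM_ne_zero a) (exists_coeffM_ne_zero ha) tle
      (fun x _ y _ => hord.tle_total x y) (fun x _ y _ z _ => hord.tle_trans x y z)
  rw [sig, dif_pos h]
  exact h.choose_spec

omit [NeZero m] in
theorem ne_zero_of_coeffM_ne_zero {a : Fin m → MvPolynomial (Fin n) K} {u : Term n m}
    (hu : coeffM a u ≠ 0) : a ≠ 0 := by
  rintro rfl
  simp [coeffM] at hu

theorem OrdersOK.sig_eq (hord : OrdersOK ple tle) {a : Fin m → MvPolynomial (Fin n) K}
    {u : Term n m} (hu : coeffM a u ≠ 0) (hmax : ∀ v, coeffM a v ≠ 0 → tle v u) :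
    sig tle a = u := by
  have h := hord.sig_spec (ne_zero_of_coeffM_ne_zero hu)
  exact hord.tle_antisymm _ _ (hmax _ h.1) (h.2 _ hu)

omit [NeZero m] in
theorem OrdersOK.lp_spec (hord : OrdersOK ple tle) {p : MvPolynomial (Fin n) K} (hp : p ≠ 0) :
    MvPolynomial.coeff (lp ple p) p ≠ 0 ∧
      ∀ s, MvPolynomial.coeff s p ≠ 0 → ple s (lp ple p) := by
  have h : ∃ t, MvPolynomial.coeff t p ≠ 0 ∧ ∀ s, MvPolynomial.coeff s p ≠ 0 → ple s t :=
    exists_max_of_total (s := {t | MvPolynomial.coeff t p ≠ 0})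
      (p.support.finite_toSet.subset fun t ht => MvPolynomial.mem_support_iff.mpr ht)
      (MvPolynomial.ne_zero_iff.mp hp) ple
      (fun x _ y _ => hord.ple_total x y) (fun x _ y _ z _ => hord.ple_trans x y z)
  rw [lp, dif_pos h]
  exact h.choose_spec

theorem exists_of_coeff_monomial_mul_ne_zero {c : K} {s t : PP n} {p : MvPolynomial (Fin n) K}
    (h : MvPolynomial.coeff s (MvPolynomial.monomial t c * p) ≠ 0) :
    ∃ r, s = t + r ∧ MvPolynomial.coeff r p ≠ 0 := by
  rw [MvPolynomial.coeff_monomial_mul'] at h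
  split_ifs at h with hle
  · exact ⟨s - t, (add_tsub_cancel_of_le hle).symm, right_ne_zero_of_mul h⟩
  · exact absurd rfl h

omit [NeZero m] in
theorem OrdersOK.lp_monomial_mul (hord : OrdersOK ple tle) {c : K} (hc : c ≠ 0) (t : PP n)
    {p : MvPolynomial (Fin n) K} (hp : p ≠ 0) :
    lp ple (MvPolynomial.monomial t c * p) = t + lp ple p := by
  have hlp := hord.lp_spec hp
  have hprod := hord.lp_spec
    (mul_ne_zero ((MvPolynomial.monomial_eq_zero (s := t)).not.mpr hc) hp)
  obtain ⟨r, hr, hr0⟩ := exists_of_coeff_monomial_mul_ne_zero hprod.1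
  refine hord.ple_antisymm _ _ ?_ (hprod.2 _ ?_)
  · rw [hr]
    exact hord.ple_mul t _ _ (hlp.2 _ hr0)
  · rw [MvPolynomial.coeff_monomial_mul]
    exact mul_ne_zero hc hlp.1

omit [NeZero m] in
theorem bar_monomMul (c : K) (t : PP n) (a : Fin m → MvPolynomial (Fin n) K) :
    bar f (monomMul c t a) = MvPolynomial.monomial t c * bar f a := by
  simp [bar, monomMul, Finset.mul_sum, mul_assoc]

omit [NeZero m] in
theorem coeffM_monomMul_mulTerm (c : K) (t : PP n) (a : Fin m → MvPolynomial (Fin n) K)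
    (u : Term n m) : coeffM (monomMul c t a) (mulTerm t u) = c * coeffM a u := by
  simp [coeffM, monomMul, mulTerm, MvPolynomial.coeff_monomial_mul]

omit [NeZero m] in
theorem exists_of_coeffM_monomMul_ne_zero {c : K} {t : PP n}
    {a : Fin m → MvPolynomial (Fin n) K} {v : Term n m} (h : coeffM (monomMul c t a) v ≠ 0) :
    ∃ w, v = mulTerm t w ∧ coeffM a w ≠ 0 := by
  obtain ⟨r, hr, hr0⟩ := exists_of_coeff_monomial_mul_ne_zero h
  exact ⟨(r, v.2), Prod.ext hr rfl, hr0⟩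

theorem OrdersOK.coeffM_mulTerm_sig_ne_zero (hord : OrdersOK ple tle) {c : K} (hc : c ≠ 0)
    (t : PP n) {a : Fin m → MvPolynomial (Fin n) K} (ha : a ≠ 0) :
    coeffM (monomMul c t a) (mulTerm t (sig tle a)) ≠ 0 := by
  rw [coeffM_monomMul_mulTerm]
  exact mul_ne_zero hc (hord.sig_spec ha).1

theorem OrdersOK.tle_of_coeffM_monomMul_ne_zero (hord : OrdersOK ple tle) {c : K} {t : PP n}
    {a : Fin m → MvPolynomial (Fin n) K} {v : Term n m} (h : coeffM (monomMul c t a) v ≠ 0) :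
    tle v (mulTerm t (sig tle a)) := by
  obtain ⟨w, rfl, hw⟩ := exists_of_coeffM_monomMul_ne_zero h
  exact hord.tle_mul t _ _ ((hord.sig_spec (ne_zero_of_coeffM_ne_zero hw)).2 w hw)

theorem OrdersOK.sig_monomMul (hord : OrdersOK ple tle) {c : K} (hc : c ≠ 0) (t : PP n)
    {a : Fin m → MvPolynomial (Fin n) K} (ha : a ≠ 0) :
    sig tle (monomMul c t a) = mulTerm t (sig tle a) :=
  hord.sig_eq (hord.coeffM_mulTerm_sig_ne_zero hc t ha)
    fun _ => hord.tle_of_coeffM_monomMul_ne_zero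

theorem OrdersOK.sig_monomMul_sub (hord : OrdersOK ple tle) {c d : K} (hc : c ≠ 0) {s t : PP n}
    {a b : Fin m → MvPolynomial (Fin n) K} (ha : a ≠ 0)
    (hlt : strict tle (mulTerm t (sig tle b)) (mulTerm s (sig tle a))) :
    sig tle (monomMul c s a - monomMul d t b) = mulTerm s (sig tle a) := by
  have hsub : ∀ v, coeffM (monomMul c s a - monomMul d t b) v =
      coeffM (monomMul c s a) v - coeffM (monomMul d t b) v := fun v => by simp [coeffM]
  apply hord.sig_eq
  · have hb : coeffM (monomMul d t b) (mulTerm s (sig tle a)) = 0 := by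
      by_contra h
      exact hlt.2 (hord.tle_antisymm _ _ hlt.1 (hord.tle_of_coeffM_monomMul_ne_zero h))
    rw [hsub, hb, sub_zero]
    exact hord.coeffM_mulTerm_sig_ne_zero hc s ha
  · intro v hv
    rw [hsub] at hv
    by_cases hva : coeffM (monomMul c s a) v = 0
    · rw [hva, zero_sub, neg_ne_zero] at hv
      exact hord.tle_trans _ _ _ (hord.tle_of_coeffM_monomMul_ne_zero hv) hlt.1
    · exact hord.tle_of_coeffM_monomMul_ne_zero hva

theorem OrdersOK.isSyzSig_mulTerm (hord : OrdersOK ple tle) {u : Term n m}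
    (hu : IsSyzSig f tle u) (t : PP n) : IsSyzSig f tle (mulTerm t u) := by
  obtain ⟨a, ha, rfl, hbar⟩ := hu
  refine ⟨monomMul 1 t a, ?_, hord.sig_monomMul one_ne_zero t ha, by
    rw [bar_monomMul, hbar, mul_zero]⟩
  exact ne_zero_of_coeffM_ne_zero (hord.coeffM_mulTerm_sig_ne_zero one_ne_zero t ha)

theorem OrdersOK.regTopRedStep_monomMul (hord : OrdersOK ple tle)
    {G : Set (Fin m → MvPolynomial (Fin n) K)} {g h : Fin m → MvPolynomial (Fin n) K}
    (hG : h ∈ G) (hg : bar f g ≠ 0) (hh : bar f h ≠ 0) {s t : PP n} (hg0 : g ≠ 0)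
    (htop : t + lp ple (bar f h) = s + lp ple (bar f g))
    (hlt : strict tle (mulTerm t (sig tle h)) (mulTerm s (sig tle g))) :
    ∃ b, RegTopRedStep f ple tle G (monomMul 1 s g) b := by
  have hsig := hord.sig_monomMul (one_ne_zero (α := K)) s hg0
  have hlp : lp ple (bar f (monomMul 1 s g)) = s + lp ple (bar f g) := by
    rw [bar_monomMul, hord.lp_monomial_mul one_ne_zero s hg]
  refine ⟨_, h, t, ⟨hG, hh, ?_, rfl, hsig ▸ hlt.1⟩, ?_, ?_⟩
  · rw [htop, bar_monomMul, MvPolynomial.coeff_monomial_mul, one_mul]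
    exact (hord.lp_spec hg).1
  · rw [RegularWith, hsig]
    exact hlt
  · rw [TopWith, hlp, htop]

theorem IsRewriteOrder.exists_isCanonRewriter
    {ro : Term n m × MvPolynomial (Fin n) K → Term n m × MvPolynomial (Fin n) K → Prop}
    (hro : IsRewriteOrder f ple tle ro) {G : Set (Fin m → MvPolynomial (Fin n) K)}
    (hfin : G.Finite) {u : Term n m}
    (hex : ∃ g ∈ G, g ≠ 0 ∧ termDvd (sig tle g) u) : ∃ g, IsCanonRewriter f tle ro G u g := by
  obtain ⟨-, htrans, htotal, -, -⟩ := hro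
  have hspp : ∀ g : Fin m → MvPolynomial (Fin n) K, g ≠ 0 → IsSPP f tle (sppOf f tle g) :=
    fun g hg => ⟨g, hg, rfl⟩
  obtain ⟨g, ⟨hg, hg0, hgu⟩, hmax⟩ := exists_max_of_total
    (s := {g | g ∈ G ∧ g ≠ 0 ∧ termDvd (sig tle g) u}) (hfin.subset fun g hg => hg.1) hex
    (fun a b => ro (sppOf f tle a) (sppOf f tle b))
    (fun a ha b hb => htotal _ _ (hspp a ha.2.1) (hspp b hb.2.1))
    (fun a ha b hb c hc => htrans _ _ _ (hspp a ha.2.1) (hspp b hb.2.1) (hspp c hc.2.1))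
  exact ⟨g, hg, hg0, hgu, fun h hh hh0 hhu => hmax h ⟨hh, hh0, hhu⟩⟩

theorem IsCanonRewriter.of_termDvd
    {ro : Term n m × MvPolynomial (Fin n) K → Term n m × MvPolynomial (Fin n) K → Prop}
    {G : Set (Fin m → MvPolynomial (Fin n) K)} {u v : Term n m}
    {g : Fin m → MvPolynomial (Fin n) K} (hg : IsCanonRewriter f tle ro G v g)
    (hgu : termDvd (sig tle g) u) (huv : termDvd u v) : IsCanonRewriter f tle ro G u g :=
  ⟨hg.1, hg.2.1, hgu, fun h hh hh0 hhu => hg.2.2.2 h hh hh0 (hhu.trans huv)⟩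

theorem IsRewriteOrder.sig_eq_of_isCanonRewriter
    {ro : Term n m × MvPolynomial (Fin n) K → Term n m × MvPolynomial (Fin n) K → Prop}
    (hro : IsRewriteOrder f ple tle ro) {G : Set (Fin m → MvPolynomial (Fin n) K)}
    {u : Term n m} {g h : Fin m → MvPolynomial (Fin n) K}
    (hg : IsCanonRewriter f tle ro G u g) (hh : IsCanonRewriter f tle ro G u h) :
    sig tle g = sig tle h :=
  hro.2.2.2.1 _ _ ⟨g, hg.2.1, rfl⟩ ⟨h, hh.2.1, rfl⟩
    (hh.2.2.2 g hg.1 hg.2.1 hg.2.2.1) (hg.2.2.2 h hh.1 hh.2.1 hh.2.2.1)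

end Leading

/-- if `G` is finite, `0 ∉ G`, signatures on `G` are pairwise distinct,
`G` is a rewrite basis in the signature of every regular S-pair of elements of `G`
that is `≺_t u`, and in every `e_i ≺_t u`, then `G` is a rewrite basis up to `u`. -/
theorem rb_upt_of_spairs (hord : OrdersOK ple tle)
    (ro : Term n m × MvPolynomial (Fin n) K → Term n m × MvPolynomial (Fin n) K → Prop)
    (hro : IsRewriteOrder f ple tle ro)
    (G : Set (Fin m → MvPolynomial (Fin n) K)) (hfin : G.Finite)
    (h0 : (0 : Fin m → MvPolynomial (Fin n) K) ∉ G)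
    (hinj : ∀ g₁ ∈ G, ∀ g₂ ∈ G, sig tle g₁ = sig tle g₂ → g₁ = g₂)
    (u : Term n m)
    (hsp : ∀ g₁ ∈ G, ∀ g₂ ∈ G, IsRegularSPair f ple tle g₁ g₂ →
      strict tle (sig tle (spair f ple g₁ g₂)) u →
      IsRBIn f ple tle ro G (sig tle (spair f ple g₁ g₂)))
    (hei : ∀ i : Fin m, strict tle ((0 : PP n), i) u →
      IsRBIn f ple tle ro G ((0 : PP n), i)) :
    IsRBUpto f ple tle ro G u := by
  intro v hv
  by_contra hnot
  obtain ⟨hsyz, hirr⟩ := not_or.mp hnot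
  have hvi : mulTerm v.1 ((0 : PP n), v.2) = v := by simp [mulTerm]
  have hev : tle ((0 : PP n), v.2) v := by
    simpa only [hvi] using hord.tle_mulTerm v.1 ((0 : PP n), v.2)
  obtain ⟨g, hg⟩ : ∃ g, IsCanonRewriter f tle ro G v g := by
    apply hro.exists_isCanonRewriter hfin
    rcases hei v.2 (hord.strict_of_tle_of_strict hev hv) with h | ⟨g, hg, -⟩
    · exact absurd (hvi ▸ hord.isSyzSig_mulTerm h v.1) hsyz
    · exact ⟨g, hg.1, hg.2.1, hg.2.2.1.trans ⟨v.1, hvi.symm⟩⟩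
  obtain ⟨hgG, hg0, ⟨t, ht⟩, -⟩ := id hg
  have htv : v.1 - (sig tle g).1 = t := by simp [ht, mulTerm]
  have hred : ∃ b, RegTopRedStep f ple tle G (monomMul (1 : K) t g) b := by
    by_contra hno
    exact hirr ⟨g, hg, fun b hb => hno ⟨b, htv ▸ hb⟩⟩
  obtain ⟨_, h, t', ⟨hhG, hh, hcoeff, -, -⟩, hreg, htop⟩ := hred
  have hgbar : bar f g ≠ 0 := by
    intro hz
    simp [bar_monomMul, hz] at hcoeff
  rw [RegularWith, hord.sig_monomMul one_ne_zero t hg0] at hreg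
  rw [TopWith, bar_monomMul, hord.lp_monomial_mul one_ne_zero t hgbar] at htop
  set p := lp ple (bar f g) with hp
  set q := lp ple (bar f h) with hq
  -- Both cofactors are a common multiple `r` of the cofactors of the S-pair.
  obtain ⟨r, hr⟩ : ∃ r, t + p = r + lcmPP p q := by
    obtain ⟨r, hr⟩ := exists_add_of_le (lcmPP_le (s := p) (t := q) (u := t + p)
      le_add_self (htop ▸ le_add_self))
    exact ⟨r, by rw [hr, add_comm]⟩
  have hsp' : lcmPP p q - p + p = lcmPP p q := tsub_add_cancel_of_le (le_lcmPP_left p q)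
  have hsq' : lcmPP p q - q + q = lcmPP p q := tsub_add_cancel_of_le (le_lcmPP_right p q)
  have htr : t = r + (lcmPP p q - p) :=
    add_right_cancel (b := p) (by rw [hr, add_assoc, hsp'])
  have htr' : t' = r + (lcmPP p q - q) :=
    add_right_cancel (b := q) (by rw [htop, hr, add_assoc, hsq'])
  rw [htr, htr', ← mulTerm_mulTerm, ← mulTerm_mulTerm, hord.strict_mulTerm_iff] at hreg
  have hsig : sig tle (spair f ple g h) = mulTerm (lcmPP p q - p) (sig tle g) :=
    hord.sig_monomMul_sub (one_div_ne_zero (hord.lp_spec hgbar).1) hg0 hreg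
  have hwv : v = mulTerm r (mulTerm (lcmPP p q - p) (sig tle g)) := by
    rw [mulTerm_mulTerm, ← htr, ht]
  have hrb := hsp g hgG h hhG ⟨hgbar, hh, hreg.2.symm⟩ (by
    rw [hsig]
    exact hord.strict_of_tle_of_strict (hwv ▸ hord.tle_mulTerm r _) hv)
  rw [hsig] at hrb
  rcases hrb with hs | ⟨g', hg', hirr'⟩
  · exact hsyz (hwv ▸ hord.isSyzSig_mulTerm hs r)
  · have hgg' : g' = g := hinj _ hg'.1 _ hgG (hro.sig_eq_of_isCanonRewriter hg'
      (hg.of_termDvd ⟨_, rfl⟩ ⟨r, hwv⟩))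
    obtain ⟨b, hb⟩ := hord.regTopRedStep_monomMul hhG hgbar hh hg0 (hsq'.trans hsp'.symm) hreg
    refine hirr' b ?_
    rw [hgg']
    simpa [mulTerm] using hb

end

end SigGB
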